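/- Let (σ_j)_{j≥1} be a sequence of positive real numbers satisfying σ_j²/(β j) → 1 as j → ∞ for some constant β > 0, let ω_j = ω(σ_j), and let n_d(ε) be the average case approximation complexity built from (ω_j). Define a_d = Σ_{j=1}^d ( |ln ω_j| ω_j/(1−ω_j) + |ln(1−ω_j)| ) and b_d = (ln d)^{3/2}/√(3β). Then for every ε ∈ (0,1), (ln n_d(ε) − a_d)/b_d → Φ⁻¹(1 − ε²) as d → ∞, where Φ is the cumulative distribution function of the standard Gaussian law and Φ⁻¹(p) = inf{x ∈ ℝ : Φ(x) ≥ p}. -/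

import Mathlib

open Filter Set

/-- `ω(σ) = (1 + (σ²/2)(1 + √(1 + 4/σ²)))⁻¹`. -/
noncomputable def omegaFn (σ : ℝ) : ℝ :=
  (1 + σ ^ 2 / 2 * (1 + Real.sqrt (1 + 4 / σ ^ 2)))⁻¹

/-- The average case approximation complexity `n_d(ε)` built from the sequence `ω`:
the minimal number `n ≥ 1` such that some finite set `S` of multi-indices with `|S| ≤ n`
captures all but `ε²` of the total mass of the eigenvalues
`λ_d(k) = ∏_{j<d} (1 - ω_j) ω_j^{k_j}`, `k : Fin d → ℕ`. -/
noncomputable def avgComplexity (ω : ℕ → ℝ) (d : ℕ) (ε : ℝ) : ℕ :=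
  sInf {n : ℕ | 1 ≤ n ∧ ∃ S : Finset (Fin d → ℕ), S.card ≤ n ∧
    ∑' k : {k : Fin d → ℕ // k ∉ S}, ∏ j : Fin d, (1 - ω j.1) * ω j.1 ^ k.1 j ≤ ε ^ 2}

/-- The cumulative distribution function `Φ` of the standard Gaussian law. -/
noncomputable def stdGaussianCDF (x : ℝ) : ℝ :=
  ProbabilityTheory.cdf (ProbabilityTheory.gaussianReal 0 1) x

/-- The quantile `Φ⁻¹(p) = inf{x : Φ(x) ≥ p}` of the standard Gaussian law. -/
noncomputable def stdGaussianQuantile (p : ℝ) : ℝ :=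
  sInf {x : ℝ | p ≤ stdGaussianCDF x}

/-- `a_d = Σ_{j=1}^d ( |ln ω_j| ω_j/(1-ω_j) + |ln(1-ω_j)| )`. -/
noncomputable def aSeq (ω : ℕ → ℝ) (d : ℕ) : ℝ :=
  ∑ j ∈ Finset.range d, (|Real.log (ω j)| * ω j / (1 - ω j) + |Real.log (1 - ω j)|)


open MeasureTheory ProbabilityTheory

noncomputable def geoM (w : ℝ) : Measure ℕ :=
  geometricMeasure (Set.projIcc 0 1 zero_le_one (1 - w))

instance (w : ℝ) : IsProbabilityMeasure (geoM w) := by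
  unfold geoM; infer_instance

lemma projIcc_aux {w : ℝ} (hw : w ∈ Ioo (0 : ℝ) 1) :
    Set.projIcc (0 : ℝ) 1 zero_le_one (1 - w) = ⟨1 - w, by constructor <;> linarith [hw.1, hw.2]⟩ :=
  Set.projIcc_of_mem _ _

lemma geoM_real_singleton {w : ℝ} (hw : w ∈ Ioo (0 : ℝ) 1) (n : ℕ) :
    (geoM w).real {n} = (1 - w) * w ^ n := by
  unfold geoM
  rw [geometricMeasure_real_singleton]
  · rw [projIcc_aux hw]; simp; ring
  · rw [projIcc_aux hw]
    intro h
    have := congrArg Subtype.val h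
    simp at this
    linarith [hw.2]

lemma geoM_integral {w : ℝ} (hw : w ∈ Ioo (0 : ℝ) 1) (f : ℕ → ℂ) :
    ∫ n, f n ∂(geoM w) = ∑' n : ℕ, ((w ^ n * (1 - w) : ℝ) : ℂ) * f n := by
  unfold geoM
  rw [integral_geometricMeasure]
  · rw [projIcc_aux hw]; simp
  · rw [projIcc_aux hw]
    intro h
    have := congrArg Subtype.val h
    simp at this
    linarith [hw.2]

noncomputable def muD (ω : ℕ → ℝ) (d : ℕ) : Measure (Fin d → ℕ) :=
  Measure.pi (fun j : Fin d => geoM (ω j.1))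

instance (ω : ℕ → ℝ) (d : ℕ) : IsProbabilityMeasure (muD ω d) := by
  unfold muD; infer_instance

noncomputable def lam (ω : ℕ → ℝ) (d : ℕ) (k : Fin d → ℕ) : ℝ :=
  ∏ j : Fin d, (1 - ω j.1) * ω j.1 ^ k j

lemma muD_real_singleton {ω : ℕ → ℝ} (h : ∀ j, ω j ∈ Ioo (0 : ℝ) 1) (d : ℕ) (k : Fin d → ℕ) :
    (muD ω d).real {k} = lam ω d k := by
  unfold muD lam
  rw [measureReal_def, Measure.pi_singleton, ENNReal.toReal_prod]
  refine Finset.prod_congr rfl fun j _ => ?_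
  rw [← geoM_real_singleton (h j)]; rfl

lemma lam_pos {ω : ℕ → ℝ} (h : ∀ j, ω j ∈ Ioo (0 : ℝ) 1) (d : ℕ) (k : Fin d → ℕ) :
    0 < lam ω d k :=
  Finset.prod_pos fun j _ => mul_pos (by linarith [(h j).2]) (pow_pos (h j).1 _)

lemma tsum_compl {ω : ℕ → ℝ} (h : ∀ j, ω j ∈ Ioo (0 : ℝ) 1) (d : ℕ) (S : Finset (Fin d → ℕ)) :
    ∑' k : {k : Fin d → ℕ // k ∉ S}, ∏ j : Fin d, (1 - ω j.1) * ω j.1 ^ k.1 j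
      = 1 - (muD ω d).real S := by
  have e : (muD ω d).real ((S : Set (Fin d → ℕ))ᶜ) = 1 - (muD ω d).real S :=
    probReal_compl_eq_one_sub (by measurability)
  rw [← e, measureReal_def, ← Measure.tsum_indicator_apply_singleton _ _ (by measurability)]
  rw [← tsum_subtype (((S : Set (Fin d → ℕ))ᶜ)) (fun x => (muD ω d) {x})]
  rw [ENNReal.tsum_toReal_eq (fun _ => measure_ne_top _ _)]
  refine tsum_congr fun k => ?_
  exact (muD_real_singleton h d k.1).symm

lemma real_finset {ω : ℕ → ℝ} (h : ∀ j, ω j ∈ Ioo (0 : ℝ) 1) (d : ℕ) (S : Finset (Fin d → ℕ)) :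
    (muD ω d).real S = ∑ k ∈ S, lam ω d k := by
  rw [← sum_measureReal_singleton]
  exact Finset.sum_congr rfl fun k _ => muD_real_singleton h d k

noncomputable def Lfn (ω : ℕ → ℝ) (d : ℕ) (k : Fin d → ℕ) : ℝ := - Real.log (lam ω d k)

lemma exp_neg_Lfn {ω : ℕ → ℝ} (h : ∀ j, ω j ∈ Ioo (0 : ℝ) 1) (d : ℕ) (k : Fin d → ℕ) :
    Real.exp (- Lfn ω d k) = lam ω d k := by
  unfold Lfn; rw [neg_neg, Real.exp_log (lam_pos h d k)]

lemma card_le_of_Lfn {ω : ℕ → ℝ} (h : ∀ j, ω j ∈ Ioo (0 : ℝ) 1) (d : ℕ) (x : ℝ)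
    (S : Finset (Fin d → ℕ)) (hS : ∀ k ∈ S, Lfn ω d k ≤ x) : (S.card : ℝ) ≤ Real.exp x := by
  have h1 : (S.card : ℝ) * Real.exp (-x) ≤ (muD ω d).real S := by
    rw [real_finset h, ← nsmul_eq_mul]
    refine Finset.card_nsmul_le_sum _ _ _ fun k hk => ?_
    rw [← exp_neg_Lfn h]
    exact Real.exp_le_exp.2 (by linarith [hS k hk])
  have h2 : (muD ω d).real S ≤ 1 := measureReal_le_one
  rw [Real.exp_neg] at h1
  have h3 := Real.exp_pos x
  have : (S.card : ℝ) * (Real.exp x)⁻¹ ≤ 1 := h1.trans h2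
  rwa [← div_eq_mul_inv, div_le_one h3] at this

lemma finite_Lfn {ω : ℕ → ℝ} (h : ∀ j, ω j ∈ Ioo (0 : ℝ) 1) (d : ℕ) (x : ℝ) :
    {k | Lfn ω d k ≤ x}.Finite := by
  by_contra hinf
  obtain ⟨n, hn⟩ := exists_nat_gt (Real.exp x)
  obtain ⟨t, ht, hc⟩ := Set.Infinite.exists_subset_card_eq hinf n
  have := card_le_of_Lfn h d x t (fun k hk => ht hk)
  rw [hc] at this
  linarith

/-- upper bound on complexity -/
lemma complexity_upper {ω : ℕ → ℝ} (h : ∀ j, ω j ∈ Ioo (0 : ℝ) 1) (d : ℕ) (x ε : ℝ)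
    (hε : ε ∈ Ioo (0 : ℝ) 1)
    (hm : 1 - ε ^ 2 ≤ (muD ω d).real {k | Lfn ω d k ≤ x}) :
    (1 ≤ avgComplexity ω d ε ∧ ∃ S : Finset (Fin d → ℕ), S.card ≤ avgComplexity ω d ε ∧
      1 - ε ^ 2 ≤ (muD ω d).real S) ∧ Real.log (avgComplexity ω d ε) ≤ x := by
  have hfin := finite_Lfn h d x
  have hS : (hfin.toFinset : Set (Fin d → ℕ)) = {k | Lfn ω d k ≤ x} := hfin.coe_toFinset
  have hmem : hfin.toFinset.card ∈ {n : ℕ | 1 ≤ n ∧ ∃ S : Finset (Fin d → ℕ), S.card ≤ n ∧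
    ∑' k : {k : Fin d → ℕ // k ∉ S}, ∏ j : Fin d, (1 - ω j.1) * ω j.1 ^ k.1 j ≤ ε ^ 2} := by
    refine ⟨?_, hfin.toFinset, le_rfl, ?_⟩
    · rw [Nat.one_le_iff_ne_zero]
      intro h0
      rw [Finset.card_eq_zero] at h0
      rw [← hS, h0] at hm
      simp at hm
      rw [abs_of_pos hε.1] at hm
      linarith [hε.2]
    · rw [tsum_compl h, hS]; linarith
  have h1 : avgComplexity ω d ε ≤ hfin.toFinset.card := Nat.sInf_le hmem
  have h2 := Nat.sInf_mem ⟨_, hmem⟩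
  change 1 ≤ avgComplexity ω d ε ∧ ∃ S : Finset (Fin d → ℕ), S.card ≤ avgComplexity ω d ε ∧ _ at h2
  obtain ⟨h3, S, h4, h5⟩ := h2
  rw [tsum_compl h] at h5
  refine ⟨⟨h3, S, h4, by linarith⟩, ?_⟩
  rw [Real.log_le_iff_le_exp (by exact_mod_cast h3)]
  calc (avgComplexity ω d ε : ℝ) ≤ hfin.toFinset.card := by exact_mod_cast h1
    _ ≤ _ := card_le_of_Lfn h d x _ (fun k hk => by simpa using hk)

lemma complexity_lower {ω : ℕ → ℝ} (h : ∀ j, ω j ∈ Ioo (0 : ℝ) 1) (d : ℕ) (x η p : ℝ) (hη : 0 < η)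
    (S : Finset (Fin d → ℕ)) (n : ℕ) (hn : S.card ≤ n)
    (hS : p ≤ (muD ω d).real S)
    (hm : (muD ω d).real {k | Lfn ω d k ≤ x} ≤ p - η) : x + Real.log η ≤ Real.log n := by
  classical
  have hfin := finite_Lfn h d x
  have h1 : (muD ω d).real S ≤ (muD ω d).real {k | Lfn ω d k ≤ x} +
      (muD ω d).real ((S.filter (fun k => x < Lfn ω d k) : Finset _) : Set (Fin d → ℕ)) := by
    refine (measureReal_mono ?_ (measure_ne_top _ _)).trans (measureReal_union_le _ _)
    intro k hk
    by_cases hk' : Lfn ω d k ≤ x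
    · exact Or.inl hk'
    · right; simp at hk ⊢; exact ⟨hk, not_le.1 hk'⟩
  have h2 : (muD ω d).real ((S.filter (fun k => x < Lfn ω d k) : Finset _) : Set (Fin d → ℕ))
      ≤ n * Real.exp (-x) := by
    rw [real_finset h]
    refine (Finset.sum_le_card_nsmul _ _ (Real.exp (-x)) ?_).trans ?_
    · intro k hk
      rw [← exp_neg_Lfn h]
      have := (Finset.mem_filter.1 hk).2
      exact Real.exp_le_exp.2 (by linarith)
    · rw [nsmul_eq_mul]
      gcongr
      exact (Finset.card_filter_le _ _).trans hn
  have h3 : η ≤ n * Real.exp (-x) := by linarith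
  have hnpos : (0 : ℝ) < n := by
    by_contra hc
    have : (n : ℝ) = 0 := le_antisymm (not_lt.1 hc) (Nat.cast_nonneg _)
    rw [this] at h3; linarith
  have := Real.log_le_log hη h3
  rw [Real.log_mul hnpos.ne' (Real.exp_pos _).ne', Real.log_exp] at this
  linarith

lemma Phi_strictMono : StrictMono stdGaussianCDF := by
  intro x y hxy
  unfold stdGaussianCDF
  rw [cdf_eq_real, cdf_eq_real]
  have hdisj : Disjoint (Iic x) (Ioc x y) := by
    rw [Set.disjoint_left]; intro a ha hb; exact absurd hb.1 (not_lt.2 ha)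
  have hu : Iic y = Iic x ∪ Ioc x y := (Iic_union_Ioc_eq_Iic hxy.le).symm
  rw [hu, measureReal_union hdisj measurableSet_Ioc]
  have : 0 < (gaussianReal 0 1).real (Ioc x y) := by
    rw [measureReal_def, ENNReal.toReal_pos_iff]
    refine ⟨?_, measure_lt_top _ _⟩
    rw [pos_iff_ne_zero]
    intro h0
    have := gaussianReal_absolutelyContinuous' 0 (one_ne_zero) h0
    rw [Real.volume_Ioc] at this
    simp at this
    linarith
  linarith

lemma quantile_lt {p x : ℝ} (hp : p ∈ Ioo (0 : ℝ) 1) (hx : stdGaussianQuantile p < x) :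
    p < stdGaussianCDF x := by
  obtain ⟨y, hy⟩ : {x : ℝ | p ≤ stdGaussianCDF x}.Nonempty := by
    have := (tendsto_cdf_atTop (gaussianReal 0 1)).eventually (lt_mem_nhds hp.2)
    obtain ⟨y, hy⟩ := this.exists
    exact ⟨y, hy.le⟩
  obtain ⟨z, hz, hzx⟩ := exists_lt_of_csInf_lt ⟨y, hy⟩ hx
  exact lt_of_le_of_lt hz (Phi_strictMono hzx)

lemma lt_quantile {p x : ℝ} (hp : p ∈ Ioo (0 : ℝ) 1) (hx : x < stdGaussianQuantile p) :
    stdGaussianCDF x < p := by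
  by_contra hc
  have hb : BddBelow {x : ℝ | p ≤ stdGaussianCDF x} := by
    have := (tendsto_cdf_atBot (gaussianReal 0 1)).eventually (gt_mem_nhds hp.1)
    obtain ⟨y, hy⟩ := this.exists
    refine ⟨y, fun z hz => ?_⟩
    by_contra hzy
    have := Phi_strictMono.monotone (not_le.1 hzy).le
    have h2 : stdGaussianCDF y < p := hy
    have h3 : p ≤ stdGaussianCDF z := hz
    linarith
  exact absurd (csInf_le hb (not_lt.1 hc)) (not_le.2 hx)

lemma core {ω : ℕ → ℝ} (h : ∀ j, ω j ∈ Ioo (0 : ℝ) 1) (a b : ℕ → ℝ)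
    (hb : Tendsto b atTop atTop)
    (clt : ∀ x, Tendsto (fun d => (muD ω d).real {k | Lfn ω d k ≤ a d + x * b d}) atTop
      (nhds (stdGaussianCDF x))) (ε : ℝ) (hε : ε ∈ Ioo (0 : ℝ) 1) :
    Tendsto (fun d => (Real.log (avgComplexity ω d ε) - a d) / b d) atTop
      (nhds (stdGaussianQuantile (1 - ε ^ 2))) := by
  set q := stdGaussianQuantile (1 - ε ^ 2) with hq
  have hp : 1 - ε ^ 2 ∈ Ioo (0 : ℝ) 1 := by constructor <;> nlinarith [hε.1, hε.2]
  rw [tendsto_order]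
  have up : ∀ x, q < x → ∀ᶠ d in atTop,
      1 - ε ^ 2 ≤ (muD ω d).real {k | Lfn ω d k ≤ a d + x * b d} := fun x hx =>
    ((clt x).eventually (lt_mem_nhds (quantile_lt hp hx))).mono fun d hd => hd.le
  constructor
  · intro y hy
    obtain ⟨x, hyx, hxq⟩ := exists_between hy
    have hx := lt_quantile hp hxq
    set η := ((1 - ε ^ 2) - stdGaussianCDF x) / 2 with hη
    have hη0 : 0 < η := by rw [hη]; linarith
    have e1 := (clt x).eventually (gt_mem_nhds (show stdGaussianCDF x < 1 - ε ^ 2 - η by linarith))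
    have e2 : Tendsto (fun d => x + Real.log η / b d) atTop (nhds (x + 0)) :=
      tendsto_const_nhds.add (hb.const_div_atTop _)
    rw [add_zero] at e2
    filter_upwards [e1, e2.eventually (lt_mem_nhds hyx), up (q + 1) (by linarith),
      hb.eventually_gt_atTop 0] with d h1 h2 h3 h4
    obtain ⟨⟨-, S, hS, hSm⟩, -⟩ := complexity_upper h d _ ε hε h3
    have h5 := complexity_lower h d _ η _ hη0 S _ hS hSm h1.le
    refine h2.trans_le ?_
    rw [le_div_iff₀ h4, add_mul, div_mul_cancel₀ _ h4.ne']
    linarith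
  · intro y hy
    obtain ⟨x, hqx, hxy⟩ := exists_between hy
    filter_upwards [up x hqx, hb.eventually_gt_atTop 0] with d h3 h4
    have h5 := (complexity_upper h d _ ε hε h3).2
    refine lt_of_le_of_lt ?_ hxy
    rw [div_le_iff₀ h4]
    linarith

lemma exp_third_order (x : ℝ) :
    ‖Complex.exp (x * Complex.I) - 1 - x * Complex.I + (x : ℂ) ^ 2 / 2‖ ≤ 4 * |x| ^ 3 := by
  by_cases hx : |x| ≤ 1
  · have h := Complex.exp_bound (x := x * Complex.I) (by simpa using hx) (n := 3) (by norm_num)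
    have e : Complex.exp (x * Complex.I) - 1 - x * Complex.I + (x : ℂ) ^ 2 / 2 =
        Complex.exp (x * Complex.I) - ∑ m ∈ Finset.range 3, (x * Complex.I) ^ m / (m.factorial : ℂ) := by
      simp [Finset.sum_range_succ, mul_pow, Nat.factorial]
      ring
    rw [e]
    refine h.trans ?_
    simp [Nat.factorial]
    nlinarith [pow_nonneg (abs_nonneg x) 3]
  · have hx' : 1 < |x| := not_le.1 hx
    have h1 : ‖Complex.exp (x * Complex.I)‖ = 1 := Complex.norm_exp_ofReal_mul_I x
    have h2 : ‖(x * Complex.I : ℂ)‖ = |x| := by simp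
    have h3 : ‖((x : ℂ) ^ 2 / 2)‖ = |x| ^ 2 / 2 := by simp
    have h4 : ‖Complex.exp (x * Complex.I) - 1 - x * Complex.I + (x : ℂ) ^ 2 / 2‖
        ≤ 1 + 1 + |x| + |x| ^ 2 / 2 := by
      refine (norm_add_le _ _).trans ?_
      rw [h3]
      gcongr
      refine (norm_sub_le _ _).trans ?_
      rw [h2]
      gcongr
      refine (norm_sub_le _ _).trans ?_
      rw [h1]; simp
    refine h4.trans ?_
    have : 1 ≤ |x| ^ 3 := one_le_pow₀ hx'.le
    have : |x| ≤ |x| ^ 3 := le_self_pow₀ hx'.le (by norm_num)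
    have : |x| ^ 2 ≤ |x| ^ 3 := pow_le_pow_right₀ hx'.le (by norm_num)
    linarith

lemma geom_log {w : ℝ} (hw : w ∈ Ioo (0 : ℝ) 1) (s : ℝ) :
    ∃ R : ℂ, ‖R‖ ≤ 8 * |s| ^ 3 * (w / (1 - w) ^ 3) ∧
      (1 - w : ℂ) / (1 - w * Complex.exp (s * Complex.I)) *
        Complex.exp (-(s * (w / (1 - w))) * Complex.I) =
      Complex.exp (-((w / (1 - w) ^ 2) * s ^ 2 / 2 : ℝ) + R) := by
  obtain ⟨h0, h1⟩ := hw
  set z := Complex.exp (s * Complex.I) with hz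
  have hzn : ‖z‖ = 1 := Complex.norm_exp_ofReal_mul_I s
  have hwn : ‖(w : ℂ)‖ = w := by simp [abs_of_pos h0]
  have hwl : ‖(w : ℂ)‖ < 1 := by rw [hwn]; exact h1
  have hwz : ‖(w * z : ℂ)‖ < 1 := by rw [norm_mul, hzn, hwn, mul_one]; exact h1
  have A1 := Complex.hasSum_taylorSeries_neg_log' hwl
  have A2 := Complex.hasSum_taylorSeries_neg_log' hwz
  have hne1 : (1 - w : ℂ) ≠ 0 := by
    have : ((1 - w : ℝ) : ℂ) ≠ 0 := by
      rw [Complex.ofReal_ne_zero]; linarith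
    simpa using this
  have hne2 : (1 - w * z : ℂ) ≠ 0 := by
    intro h
    have : (w * z : ℂ) = 1 := (sub_eq_zero.1 h).symm
    rw [this] at hwz; simp at hwz
  have A3 : HasSum (fun n : ℕ => (w : ℂ) ^ (n + 1)) (w / (1 - w)) := by
    have := (hasSum_geometric_of_norm_lt_one hwl).mul_left (w : ℂ)
    simpa [pow_succ', div_eq_mul_inv] using this
  have A4 : HasSum (fun n : ℕ => ((n : ℂ) + 1) * (w : ℂ) ^ (n + 1)) (w / (1 - w) ^ 2) := by
    have := (hasSum_choose_mul_geometric_of_norm_lt_one 1 hwl).mul_left (w : ℂ)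
    have e1 : (fun n : ℕ => ((n : ℂ) + 1) * (w : ℂ) ^ (n + 1)) =
        fun i : ℕ => (w : ℂ) * (((i + 1).choose 1 : ℕ) * (w : ℂ) ^ i) := by
      ext n; rw [Nat.choose_one_right]; push_cast; ring
    have e2 : (w / (1 - w) ^ 2 : ℂ) = w * (1 / (1 - w) ^ (1 + 1)) := by
      norm_num [div_eq_mul_inv]
    rw [e1, e2]
    exact this
  have A5 : HasSum (fun n : ℕ => (((n + 2).choose 2 : ℝ)) * w ^ n) (1 / (1 - w) ^ 3) := by
    simpa using hasSum_choose_mul_geometric_of_norm_lt_one (𝕜 := ℝ) 2 (r := w)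
      (by simpa [abs_of_pos h0] using h1)
  have A6 := ((A2.sub A1).sub (A3.mul_left (s * Complex.I))).add (A4.mul_left ((s : ℂ) ^ 2 / 2))
  refine ⟨(-Complex.log (1 - w * z) - -Complex.log (1 - w) - s * Complex.I * (w / (1 - w)) +
        (s : ℂ) ^ 2 / 2 * (w / (1 - w) ^ 2)), ?_, ?_⟩
  rotate_left
  · have e : (-((w / (1 - w) ^ 2) * s ^ 2 / 2 : ℝ) : ℂ) +
      (-Complex.log (1 - w * z) - -Complex.log (1 - w) - s * Complex.I * (w / (1 - w)) +
        (s : ℂ) ^ 2 / 2 * (w / (1 - w) ^ 2)) =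
        -Complex.log (1 - w * z) + (Complex.log (1 - w) + -(s * (w / (1 - w))) * Complex.I) := by
      push_cast; ring
    rw [e, Complex.exp_add, Complex.exp_add, Complex.exp_neg, Complex.exp_log hne1,
      Complex.exp_log hne2]
    ring
  · rw [← A6.tsum_eq]
    have B : HasSum (fun n : ℕ => 8 * |s| ^ 3 * w * (((n + 2).choose 2 : ℝ) * w ^ n))
        (8 * |s| ^ 3 * (w / (1 - w) ^ 3)) := by
      have e3 : 8 * |s| ^ 3 * (w / (1 - w) ^ 3) = 8 * |s| ^ 3 * w * (1 / (1 - w) ^ 3) := by ring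
      rw [e3]
      exact A5.mul_left (8 * |s| ^ 3 * w)
    refine tsum_of_norm_bounded B fun n => ?_
    have hn : ((n : ℂ) + 1) ≠ 0 := by exact_mod_cast Nat.succ_ne_zero n
    have hzp : z ^ (n + 1) = Complex.exp ((((n + 1) * s : ℝ) : ℂ) * Complex.I) := by
      rw [hz, ← Complex.exp_nat_mul]; congr 1; push_cast; ring
    have e : ((w : ℂ) * z) ^ (n + 1) / ((n : ℂ) + 1) - (w : ℂ) ^ (n + 1) / ((n : ℂ) + 1)
        - s * Complex.I * (w : ℂ) ^ (n + 1)
        + (s : ℂ) ^ 2 / 2 * (((n : ℂ) + 1) * (w : ℂ) ^ (n + 1)) =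
        (((w ^ (n + 1) / (n + 1) : ℝ)) : ℂ) *
        (Complex.exp ((((n + 1) * s : ℝ) : ℂ) * Complex.I) - 1 - (((n + 1) * s : ℝ) : ℂ) * Complex.I
          + (((n + 1) * s : ℝ) : ℂ) ^ 2 / 2) := by
      rw [mul_pow, hzp]; push_cast; field_simp
    rw [e, norm_mul, Complex.norm_real, Real.norm_of_nonneg (by positivity)]
    refine (mul_le_mul_of_nonneg_left (exp_third_order _) (by positivity)).trans ?_
    have hn1 : (0 : ℝ) < n + 1 := by positivity
    rw [abs_mul, abs_of_pos hn1, mul_pow]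
    have hc : (((n + 2).choose 2 : ℕ) : ℝ) = (n + 2) * (n + 1) / 2 := by
      rw [Nat.cast_choose_two]; push_cast; ring
    rw [hc]
    have : w ^ (n + 1) / (n + 1) * (4 * ((n + 1) ^ 3 * |s| ^ 3)) =
      4 * |s| ^ 3 * w * w ^ n * (n + 1) * (n + 1) := by
      field_simp
      ring
    rw [this]
    have h8 : 8 * |s| ^ 3 * w * ((n + 2) * (n + 1) / 2 * w ^ n) =
      4 * |s| ^ 3 * w * w ^ n * (n + 1) * (n + 2) := by ring
    rw [h8]
    gcongr
    norm_num

lemma geoM_charFun {w : ℝ} (hw : w ∈ Ioo (0 : ℝ) 1) (s m : ℝ) :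
    ∫ n, Complex.exp ((s * ((n : ℕ) - m) : ℝ) * Complex.I) ∂(geoM w) =
      (1 - w : ℂ) / (1 - w * Complex.exp (s * Complex.I)) *
        Complex.exp (-(s * m) * Complex.I) := by
  rw [geoM_integral hw]
  have hwz : ‖(w * Complex.exp (s * Complex.I) : ℂ)‖ < 1 := by
    rw [norm_mul, Complex.norm_exp_ofReal_mul_I]; simp [abs_of_pos hw.1, hw.2]
  have := ((hasSum_geometric_of_norm_lt_one hwz).mul_left
    ((1 - w : ℂ) * Complex.exp (-(s * m) * Complex.I)))
  have h2 : (1 - w : ℂ) / (1 - w * Complex.exp (s * Complex.I)) *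
        Complex.exp (-(s * m) * Complex.I) = (1 - w : ℂ) * Complex.exp (-(s * m) * Complex.I)
        * (1 - w * Complex.exp (s * Complex.I))⁻¹ := by ring
  rw [h2, ← this.tsum_eq]
  refine tsum_congr fun n => ?_
  have : (((s * ((n : ℕ) - m) : ℝ) : ℂ) * Complex.I) =
    n * (s * Complex.I) + (-(s * m) * Complex.I) := by push_cast; ring
  rw [this, Complex.exp_add, Complex.exp_nat_mul, mul_pow]
  push_cast; ring

lemma Lfn_sub {ω : ℕ → ℝ} (h : ∀ j, ω j ∈ Ioo (0 : ℝ) 1) (d : ℕ) (k : Fin d → ℕ) :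
    Lfn ω d k - aSeq ω d =
      ∑ j : Fin d, -Real.log (ω j.1) * ((k j : ℝ) - ω j.1 / (1 - ω j.1)) := by
  unfold Lfn aSeq lam
  rw [Real.log_prod (s := Finset.univ) (f := fun j : Fin d => (1 - ω j.1) * ω j.1 ^ k j) (fun j _ => (mul_pos (by linarith [(h j).2]) (pow_pos (h j).1 _)).ne'),
    ← Fin.sum_univ_eq_sum_range (fun j => |Real.log (ω j)| * ω j / (1 - ω j) + |Real.log (1 - ω j)|) d,
    ← Finset.sum_neg_distrib, ← Finset.sum_sub_distrib]
  refine Finset.sum_congr rfl fun j _ => ?_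
  have h0 := (h j).1
  have h1 := (h j).2
  rw [Real.log_mul (by linarith) (pow_pos h0 _).ne', Real.log_pow,
    abs_of_neg (Real.log_neg h0 h1), abs_of_neg (Real.log_neg (by linarith) (by linarith))]
  ring

lemma clt {ω : ℕ → ℝ} (h : ∀ j, ω j ∈ Ioo (0 : ℝ) 1) (b : ℕ → ℝ)
    (hb : Tendsto b atTop atTop)
    (hV : Tendsto (fun d => (∑ j ∈ Finset.range d,
      ω j / (1 - ω j) ^ 2 * (-Real.log (ω j)) ^ 2) / b d ^ 2) atTop (nhds 1))
    (hT : Tendsto (fun d => (∑ j ∈ Finset.range d,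
      ω j / (1 - ω j) ^ 3 * (-Real.log (ω j)) ^ 3) / b d ^ 3) atTop (nhds 0)) (x : ℝ) :
    Tendsto (fun d => (muD ω d).real {k | Lfn ω d k ≤ aSeq ω d + x * b d}) atTop
      (nhds (stdGaussianCDF x)) := by
  have hmeas : ∀ d, Measurable (fun k => (Lfn ω d k - aSeq ω d) / b d) := fun d =>
    measurable_of_countable _
  let ν : ℕ → ProbabilityMeasure ℝ := fun d =>
    ⟨(muD ω d).map (fun k => (Lfn ω d k - aSeq ω d) / b d),
      Measure.isProbabilityMeasure_map (hmeas d).aemeasurable⟩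
  let ν₀ : ProbabilityMeasure ℝ := ⟨gaussianReal 0 1, inferInstance⟩
  have hchar : Tendsto ν atTop (nhds ν₀) := by
    apply ProbabilityMeasure.tendsto_of_tendsto_charFun
    intro t
    have e1 : charFun (ν₀ : Measure ℝ) t = Complex.exp (-((t ^ 2 / 2 : ℝ) : ℂ) + 0) := by
      change charFun (gaussianReal 0 1) t = _
      rw [charFun_gaussianReal]; congr 1; push_cast; simp
    have e2 : ∀ d, charFun (ν d : Measure ℝ) t = ∏ j : Fin d,
        ((1 - ω j : ℂ) / (1 - ω j * Complex.exp ((t * -Real.log (ω j) / b d : ℝ) * Complex.I)) *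
        Complex.exp (-((t * -Real.log (ω j) / b d : ℝ) * ((ω j / (1 - ω j) : ℝ) : ℂ)) * Complex.I)) := by
      intro d
      change charFun ((muD ω d).map (fun k => (Lfn ω d k - aSeq ω d) / b d)) t = _
      rw [charFun_apply_real, integral_map (hmeas d).aemeasurable
        (by fun_prop)]
      have : ∀ k : Fin d → ℕ, Complex.exp (t * (((Lfn ω d k - aSeq ω d) / b d : ℝ) : ℂ) * Complex.I) =
          ∏ j : Fin d, Complex.exp (((t * -Real.log (ω j) / b d) * ((k j : ℕ) - (ω j / (1 - ω j))) : ℝ) * Complex.I) := by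
        intro k
        rw [← Complex.exp_sum, Lfn_sub h, ← Finset.sum_mul]
        congr 2
        rw [Finset.sum_div, ← Complex.ofReal_mul, ← Complex.ofReal_sum]
        congr 1
        rw [Finset.mul_sum]
        refine Finset.sum_congr rfl fun j _ => ?_
        ring
      simp_rw [this]
      unfold muD
      rw [integral_fintype_prod_eq_prod (fun (j : Fin d) (n : ℕ) => Complex.exp (((t * -Real.log (ω j) / b d) * ((n : ℕ) - (ω j / (1 - ω j))) : ℝ) * Complex.I))]
      refine Finset.prod_congr rfl fun j _ => ?_
      rw [geoM_charFun (h j)]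
    choose! R hR1 hR2 using fun (j : ℕ) (s : ℝ) => geom_log (h j) s
    have e3 : ∀ d, charFun (ν d : Measure ℝ) t = Complex.exp
        (-(((t ^ 2 / 2 * ((∑ j ∈ Finset.range d,
      ω j / (1 - ω j) ^ 2 * (-Real.log (ω j)) ^ 2) / b d ^ 2)) : ℝ) : ℂ) +
      ∑ j ∈ Finset.range d, R j (t * -Real.log (ω j) / b d)) := by
      intro d
      rw [e2]
      have : ∀ j : Fin d, ((1 - ω j : ℂ) / (1 - ω j * Complex.exp ((t * -Real.log (ω j) / b d : ℝ) * Complex.I)) *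
        Complex.exp (-((t * -Real.log (ω j) / b d : ℝ) * ((ω j / (1 - ω j) : ℝ) : ℂ)) * Complex.I)) = _ :=
        fun j => by
          have := hR2 j (t * -Real.log (ω j) / b d)
          push_cast at this ⊢
          exact this
      rw [Finset.prod_congr rfl (fun j _ => this j), ← Complex.exp_sum]
      congr 1
      rw [Fin.sum_univ_eq_sum_range (fun j => -((ω j : ℂ) / (1 - ω j) ^ 2 *
        ((t : ℂ) * -(Real.log (ω j) : ℂ) / b d) ^ 2 / 2) + R j (t * -Real.log (ω j) / b d)) d]
      rw [Finset.sum_add_distrib]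
      congr 1
      push_cast
      rw [Finset.sum_neg_distrib, Finset.sum_div, Finset.mul_sum]
      congr 1
      refine Finset.sum_congr rfl fun j _ => ?_
      ring
    rw [e1]
    simp_rw [e3]
    refine (Complex.continuous_exp.tendsto _).comp (Tendsto.add (Tendsto.neg ?_) ?_)
    · refine (Complex.continuous_ofReal.tendsto _).comp ?_
      simpa using hV.const_mul (t ^ 2 / 2)
    · have hT' := hT.const_mul (8 * |t| ^ 3)
      rw [mul_zero] at hT'
      refine squeeze_zero_norm' ?_ hT'
      filter_upwards [hb.eventually_gt_atTop 0] with d hd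
      refine (norm_sum_le _ _).trans ?_
      rw [Finset.sum_div, Finset.mul_sum]
      refine Finset.sum_le_sum fun j _ => (hR1 j _).trans (le_of_eq ?_)
      have hl : 0 < -Real.log (ω j) := by linarith [Real.log_neg (h j).1 (h j).2]
      rw [abs_div, abs_mul, abs_of_pos hl, abs_of_pos hd]
      ring
  have hfr : (ν₀ : Measure ℝ) (frontier (Iic x)) = 0 := by
    rw [frontier_Iic]
    have := nullSingletonClass_gaussianReal (μ := 0) (v := 1) one_ne_zero
    exact measure_singleton (μ := gaussianReal 0 1) x
  have key := ProbabilityMeasure.tendsto_measure_of_null_frontier_of_tendsto' hchar hfr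
  have key2 := (ENNReal.tendsto_toReal (measure_ne_top (ν₀ : Measure ℝ) (Iic x))).comp key
  have e4 : ((ν₀ : Measure ℝ) (Iic x)).toReal = stdGaussianCDF x := by
    unfold stdGaussianCDF; rw [cdf_eq_real]; rfl
  rw [e4] at key2
  refine key2.congr' ?_
  filter_upwards [hb.eventually_gt_atTop 0] with d hd
  change (((muD ω d).map (fun k => (Lfn ω d k - aSeq ω d) / b d)) (Iic x)).toReal = _
  rw [Measure.map_apply (hmeas d) measurableSet_Iic, measureReal_def]
  congr 2
  ext k
  simp only [mem_preimage, mem_Iic, mem_ofPred_eq]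
  rw [div_le_iff₀ hd]
  constructor <;> intro _ <;> linarith

lemma tendsto_log_nat : Tendsto (fun j : ℕ => Real.log (j : ℝ)) atTop atTop :=
  Real.tendsto_log_atTop.comp tendsto_natCast_atTop_atTop

lemma gdiff_tendsto (p : ℕ) :
    Tendsto (fun j : ℕ => (Real.log ((j + 1 : ℕ) : ℝ) ^ (p + 1) - Real.log (j : ℝ) ^ (p + 1))
      * j / Real.log (j : ℝ) ^ p) atTop (nhds ((p : ℝ) + 1)) := by
  have hu : Tendsto (fun j : ℕ => (j : ℝ) * Real.log (1 + 1 / (j : ℝ))) atTop (nhds 1) :=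
    (Real.tendsto_mul_log_one_add_div_atTop 1).comp tendsto_natCast_atTop_atTop
  have hr : Tendsto (fun j : ℕ => 1 + (j : ℝ) * Real.log (1 + 1 / (j : ℝ)) /
      ((j : ℝ) * Real.log j)) atTop (nhds (1 + 0)) :=
    tendsto_const_nhds.add (hu.div_atTop (tendsto_natCast_atTop_atTop.atTop_mul_atTop₀ tendsto_log_nat))
  rw [add_zero] at hr
  have hs := hu.mul (tendsto_finsetSum (Finset.range (p + 1)) (fun i _ => hr.pow i))
  simp only [one_pow, Finset.sum_const, Finset.card_range, nsmul_eq_mul, mul_one, one_mul] at hs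
  push_cast at hs
  refine hs.congr' ?_
  filter_upwards [eventually_gt_atTop 0, tendsto_log_nat.eventually_gt_atTop 0] with j hj hl
  have hj' : (0 : ℝ) < j := by exact_mod_cast hj
  have hx : Real.log ((j + 1 : ℕ) : ℝ) = Real.log j + Real.log (1 + 1 / (j : ℝ)) := by
    rw [← Real.log_mul hj'.ne' (by positivity)]
    congr 1; push_cast; field_simp
  rw [hx]
  set u := Real.log (1 + 1 / (j : ℝ))
  set y := Real.log (j : ℝ)
  have hru : 1 + (j : ℝ) * u / ((j : ℝ) * y) = (y + u) / y := by field_simp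
  rw [hru]
  have hg := mul_neg_geom_sum ((y + u) / y) (p + 1)
  have h1 : (1 - (y + u) / y) = - (u / y) := by field_simp; ring
  rw [h1, div_pow (y + u) y (p + 1)] at hg
  set G := ∑ i ∈ Finset.range (p + 1), ((y + u) / y) ^ i
  have h2 : (y + u) ^ (p + 1) = y ^ (p + 1) * (1 + u / y * G) := by
    have h3 : (y + u) ^ (p + 1) / y ^ (p + 1) = 1 + u / y * G := by linarith
    rw [← h3]; field_simp
  rw [h2]
  field_simp
  ring

lemma sum_log_asymp (f : ℕ → ℝ) (p : ℕ) (c : ℝ)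
    (hf : Tendsto (fun j : ℕ => f j * j / Real.log (j : ℝ) ^ p) atTop (nhds c)) :
    Tendsto (fun d : ℕ => (∑ j ∈ Finset.range d, f j) / Real.log (d : ℝ) ^ (p + 1)) atTop
      (nhds (c / (p + 1))) := by
  set g : ℕ → ℝ := fun j => Real.log ((j + 1 : ℕ) : ℝ) ^ (p + 1) - Real.log (j : ℝ) ^ (p + 1) with hgdef
  have hp1 : (0 : ℝ) < (p : ℝ) + 1 := by positivity
  have hgsum : ∀ d : ℕ, ∑ j ∈ Finset.range d, g j = Real.log (d : ℝ) ^ (p + 1) := by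
    intro d
    rw [Finset.sum_range_sub (fun j : ℕ => Real.log (j : ℝ) ^ (p + 1))]
    simp
  have hg0 : 0 ≤ g := by
    intro j
    simp only [hgdef, Pi.zero_apply, sub_nonneg]
    rcases Nat.eq_zero_or_pos j with rfl | hj
    · simp
    · have : (1 : ℝ) ≤ j := by exact_mod_cast hj
      have h0 := Real.log_nonneg this
      gcongr
      simp
  have hgtop : Tendsto (fun d => ∑ j ∈ Finset.range d, g j) atTop atTop := by
    simp_rw [hgsum]
    exact (tendsto_pow_atTop (by omega)).comp tendsto_log_nat
  have hratio : Tendsto (fun j => f j / g j) atTop (nhds (c / (p + 1))) := by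
    refine (hf.div (gdiff_tendsto p) hp1.ne').congr' ?_
    filter_upwards [eventually_gt_atTop 0, tendsto_log_nat.eventually_gt_atTop 0] with j hj hl
    have hj' : (j : ℝ) ≠ 0 := by exact_mod_cast hj.ne'
    have hlp := (pow_pos hl p).ne'
    simp only [Pi.div_apply]
    change f j * j / Real.log j ^ p / (g j * j / Real.log j ^ p) = _
    rw [div_div_div_cancel_right₀ hlp, mul_div_mul_right _ _ hj']
  have hgne : ∀ᶠ j in atTop, g j ≠ 0 := by
    filter_upwards [(gdiff_tendsto p).eventually (lt_mem_nhds hp1)] with j hj h0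
    change 0 < g j * j / Real.log j ^ p at hj
    rw [h0] at hj; simp at hj
  have ho : (fun j => f j - c / (p + 1) * g j) =o[atTop] g := by
    rw [Asymptotics.isLittleO_iff_tendsto' (hgne.mono fun j hj h => absurd h hj)]
    have := hratio.sub_const (c / (p + 1))
    rw [sub_self] at this
    refine this.congr' ?_
    filter_upwards [hgne] with j hj
    field_simp
  have hs := (ho.sum_range hg0 hgtop).tendsto_div_nhds_zero
  have := hs.add_const (c / (p + 1))
  rw [zero_add] at this
  refine this.congr' ?_
  filter_upwards [tendsto_log_nat.eventually_gt_atTop 0] with d hd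
  rw [Finset.sum_sub_distrib, ← Finset.mul_sum, hgsum]
  have := (pow_pos hd (p + 1)).ne'
  field_simp
  ring

lemma omegaFn_mem {σ : ℝ} (h : 0 < σ) : omegaFn σ ∈ Ioo (0 : ℝ) 1 := by
  unfold omegaFn
  have : 0 < σ ^ 2 / 2 * (1 + Real.sqrt (1 + 4 / σ ^ 2)) := by positivity
  exact ⟨by positivity, inv_lt_one_of_one_lt₀ (by linarith)⟩

lemma omega_tendsto (σseq : ℕ → ℝ) (hpos : ∀ j, 0 < σseq j)
    (β : ℝ) (hβ : 0 < β)
    (hasymp : Tendsto (fun j : ℕ => (σseq j) ^ 2 / (β * (j : ℝ))) atTop (nhds 1)) :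
    Tendsto (fun j : ℕ => omegaFn (σseq j) * (β * j)) atTop (nhds 1) := by
  have hbj : Tendsto (fun j : ℕ => β * (j : ℝ)) atTop atTop :=
    tendsto_natCast_atTop_atTop.const_mul_atTop hβ
  have hS : Tendsto (fun j => σseq j ^ 2) atTop atTop := by
    refine (hasymp.pos_mul_atTop one_pos hbj).congr' ?_
    filter_upwards [hbj.eventually_gt_atTop 0] with j hj
    exact div_mul_cancel₀ _ hj.ne'
  have h1 : Tendsto (fun j => 1 / σseq j ^ 2 + (1 + Real.sqrt (1 + 4 / σseq j ^ 2)) / 2) atTop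
      (nhds (0 + (1 + Real.sqrt (1 + 0)) / 2)) :=
    (hS.const_div_atTop 1).add (((((hS.const_div_atTop 4).const_add 1).sqrt).const_add 1).div_const 2)
  have h2 : (0 + (1 + Real.sqrt (1 + 0)) / 2) = (1 : ℝ) := by norm_num
  rw [h2] at h1
  have h3 := (h1.mul hasymp).inv₀ (by norm_num)
  simp only [mul_one, inv_one] at h3
  refine h3.congr' ?_
  filter_upwards [hbj.eventually_gt_atTop 0] with j hj
  have hs := pow_pos (hpos j) 2
  unfold omegaFn
  set r := Real.sqrt (1 + 4 / σseq j ^ 2)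
  set S := σseq j ^ 2
  have hr : 0 ≤ r := Real.sqrt_nonneg _
  have : (1 / S + (1 + r) / 2) * (S / (β * j)) = (1 + S / 2 * (1 + r)) / (β * j) := by
    field_simp
  rw [this, inv_div, div_eq_mul_inv]
  ring

lemma log_omega_tendsto (ω : ℕ → ℝ) (h : ∀ j, ω j ∈ Ioo (0 : ℝ) 1) (β : ℝ) (hβ : 0 < β)
    (hω : Tendsto (fun j : ℕ => ω j * (β * j)) atTop (nhds 1)) :
    Tendsto (fun j : ℕ => -Real.log (ω j) / Real.log (j : ℝ)) atTop (nhds 1) := by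
  have h1 := hω.log one_ne_zero
  have h2 : Tendsto (fun j : ℕ => 1 + (Real.log β - Real.log (ω j * (β * j))) / Real.log (j : ℝ))
      atTop (nhds (1 + 0)) :=
    tendsto_const_nhds.add ((tendsto_const_nhds.sub h1).div_atTop tendsto_log_nat)
  rw [add_zero] at h2
  refine h2.congr' ?_
  filter_upwards [eventually_gt_atTop 0, tendsto_log_nat.eventually_gt_atTop 0] with j hj hl
  have hj' : (j : ℝ) ≠ 0 := by exact_mod_cast hj.ne'
  rw [Real.log_mul (h j).1.ne' (mul_ne_zero hβ.ne' hj'), Real.log_mul hβ.ne' hj']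
  field_simp
  ring

lemma term_tendsto (ω : ℕ → ℝ) (h : ∀ j, ω j ∈ Ioo (0 : ℝ) 1) (β : ℝ) (hβ : 0 < β)
    (hω : Tendsto (fun j : ℕ => ω j * (β * j)) atTop (nhds 1)) (p q : ℕ) :
    Tendsto (fun j : ℕ => (ω j / (1 - ω j) ^ q * (-Real.log (ω j)) ^ p) * j / Real.log (j : ℝ) ^ p)
      atTop (nhds (1 / β)) := by
  have hbj : Tendsto (fun j : ℕ => β * (j : ℝ)) atTop atTop :=
    tendsto_natCast_atTop_atTop.const_mul_atTop hβ
  have h0 : Tendsto ω atTop (nhds 0) := by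
    refine (hω.div_atTop hbj).congr' ?_
    filter_upwards [hbj.eventually_gt_atTop 0] with j hj
    exact mul_div_cancel_right₀ _ hj.ne'
  have h1 : Tendsto (fun j => (1 - ω j) ^ q) atTop (nhds ((1 - 0) ^ q)) :=
    (tendsto_const_nhds.sub h0).pow q
  simp only [sub_zero, one_pow] at h1
  have h2 := ((hω.div_const β).div h1 one_ne_zero).mul ((log_omega_tendsto ω h β hβ hω).pow p)
  simp only [one_pow, mul_one, div_one] at h2
  refine h2.congr' ?_
  filter_upwards [tendsto_log_nat.eventually_gt_atTop 0] with j hl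
  have h3 : (1 - ω j) ≠ 0 := by linarith [(h j).2]
  simp only [Pi.div_apply]
  rw [div_pow]
  field_simp

theorem logAsymptotics_linear_scale (σseq : ℕ → ℝ) (hpos : ∀ j, 0 < σseq j)
    (β : ℝ) (hβ : 0 < β)
    (hasymp : Tendsto (fun j : ℕ => (σseq j) ^ 2 / (β * (j : ℝ))) atTop (nhds 1)) :
    ∀ ε ∈ Set.Ioo (0 : ℝ) 1,
      Tendsto (fun d : ℕ =>
          (Real.log (avgComplexity (fun j => omegaFn (σseq j)) d ε)
              - aSeq (fun j => omegaFn (σseq j)) d)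
            / (Real.log d ^ ((3 : ℝ) / 2) / Real.sqrt (3 * β)))
        atTop (nhds (stdGaussianQuantile (1 - ε ^ 2))) := by
  intro ε hε
  have h : ∀ j, (fun j => omegaFn (σseq j)) j ∈ Ioo (0 : ℝ) 1 := fun j => omegaFn_mem (hpos j)
  have hω := omega_tendsto σseq hpos β hβ hasymp
  have hq0 : 0 < Real.sqrt (3 * β) := Real.sqrt_pos.2 (by positivity)
  have hq2 : Real.sqrt (3 * β) ^ 2 = 3 * β := Real.sq_sqrt (by positivity)
  have hb : Tendsto (fun d : ℕ => Real.log d ^ ((3 : ℝ) / 2) / Real.sqrt (3 * β)) atTop atTop :=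
    ((tendsto_rpow_atTop (by norm_num)).comp tendsto_log_nat).atTop_div_const hq0
  have hsq : Tendsto (fun d : ℕ => Real.sqrt (Real.log d)) atTop atTop :=
    Real.tendsto_sqrt_atTop.comp tendsto_log_nat
  have hpow : ∀ L : ℝ, 0 < L → L ^ ((3 : ℝ) / 2) = Real.sqrt L ^ 3 := by
    intro L hL
    rw [Real.sqrt_eq_rpow, ← Real.rpow_natCast, ← Real.rpow_mul hL.le]
    norm_num
  refine core h _ _ hb (clt h _ hb ?_ ?_) ε hε
  · have h1 := (sum_log_asymp _ 2 _ (term_tendsto _ h β hβ hω 2 2)).const_mul (3 * β)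
    have h2 : 3 * β * (1 / β / ((2 : ℕ) + 1)) = 1 := by
      push_cast; field_simp; norm_num
    rw [h2] at h1
    refine h1.congr' ?_
    filter_upwards [tendsto_log_nat.eventually_gt_atTop 0] with d hd
    rw [hpow _ hd, div_pow, hq2]
    have hL : Real.sqrt (Real.log d) ^ 2 = Real.log d := Real.sq_sqrt hd.le
    have : (Real.sqrt (Real.log d) ^ 3) ^ 2 = Real.log d ^ (2 + 1) := by
      rw [← hL, Real.sqrt_sq (Real.sqrt_nonneg _)]; ring
    rw [this]
    field_simp
  · have h1 := (sum_log_asymp _ 3 _ (term_tendsto _ h β hβ hω 3 3)).mul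
      (hsq.const_div_atTop (Real.sqrt (3 * β) ^ 3))
    rw [mul_zero] at h1
    refine h1.congr' ?_
    filter_upwards [tendsto_log_nat.eventually_gt_atTop 0] with d hd
    rw [hpow _ hd]
    have hr : 0 < Real.sqrt (Real.log d) := Real.sqrt_pos.2 hd
    have hL : Real.sqrt (Real.log d) ^ 2 = Real.log d := Real.sq_sqrt hd.le
    have : Real.log d ^ (3 + 1) = Real.sqrt (Real.log d) ^ 8 := by
      nth_rw 1 [← hL]; ring
    rw [this]
    field_simp
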